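/- arXiv:0707.1223 — 2 statements merged into one kernel-verified Lean document; each statement's English description precedes it below -/
import Mathlib

section
/- Let s and k be positive integers with k+s divisible by 3, gcd(s,3k)=1 and gcd(k,3)=1, let u be a primitive element of GF(2^{3k}), and let w be an element of the subfield GF(2^k). Then for every nonzero q in GF(2^{3k}), D := w·u^{2^k+1}·q^{2^{k+s}+2^s} + u^{2^k}·q^{2^{2k}+2^{k+s}} ≠ 0. -/
theorem two_pow_mod_seven_eq_of_modEq_three {m n : ℕ} (h : m ≡ n [MOD 3]) :
    2 ^ m ≡ 2 ^ n [MOD 7] := by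
  have key (r : ℕ) : 2 ^ r ≡ 2 ^ (r % 3) [MOD 7] := by
    conv_lhs => rw [← Nat.div_add_mod r 3, pow_add, pow_mul]
    simpa using ((show 2 ^ 3 ≡ 1 [MOD 7] by decide).pow (r / 3)).mul_right (2 ^ (r % 3))
  have h' : m % 3 = n % 3 := h
  exact (key m).trans (h' ▸ (key n).symm)

theorem seven_dvd_of_gcd_three_eq_one {k : ℕ} (hk : Nat.gcd k 3 = 1) :
    7 ∣ 2 ^ (2 * k) + 2 ^ k + 1 := by
  have hmod : k % 3 = 1 ∨ k % 3 = 2 := by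
    have : ¬ 3 ∣ k := fun h => by simp [Nat.gcd_eq_right h] at hk
    lia
  rw [← Nat.modEq_zero_iff_dvd]
  rcases hmod with h | h
  · have h1 := two_pow_mod_seven_eq_of_modEq_three (m := k) (n := 1) h
    have h2 := two_pow_mod_seven_eq_of_modEq_three (m := 2 * k) (n := 2)
      (by unfold Nat.ModEq; lia)
    exact ((h2.add h1).add_right 1).trans (by decide)
  · have h1 := two_pow_mod_seven_eq_of_modEq_three (m := k) (n := 2) h
    have h2 := two_pow_mod_seven_eq_of_modEq_three (m := 2 * k) (n := 1)
      (by unfold Nat.ModEq; lia)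
    exact ((h2.add h1).add_right 1).trans (by decide)

/-- In a finite field whose nonzero elements are all powers of `u`, the exponents annihilating `u`
are the multiples of the order of the multiplicative group. -/
theorem card_sub_one_dvd_of_pow_eq_one {K : Type*} [Field K] [Fintype K] {u : K} {i : ℕ}
    (hu : ∀ x : K, x ≠ 0 → ∃ m : ℕ, x = u ^ m) (hi : u ^ i = 1) :
    Fintype.card K - 1 ∣ i := by
  rw [← FiniteField.forall_pow_eq_one_iff]
  intro x
  obtain ⟨m, hm⟩ := hu x x.ne_zero
  ext
  rw [Units.val_pow_eq_pow_val, hm, pow_right_comm, hi, one_pow, Units.val_one]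

/-- The coefficient `D = w u^{2^k+1} q^{2^{k+s}+2^s} + u^{2^k} q^{2^{2k}+2^{k+s}}`
never vanishes for nonzero `q`. -/
theorem coefficient_D_ne_zero (s k : ℕ) (hs : 0 < s) (hk : 0 < k)
    (h3 : 3 ∣ (k + s)) (hsk : Nat.gcd s (3 * k) = 1) (hk3 : Nat.gcd k 3 = 1)
    (u w : GaloisField 2 (3 * k))
    (hu : ∀ x : GaloisField 2 (3 * k), x ≠ 0 → ∃ m : ℕ, x = u ^ m)
    (hw : w ^ (2 ^ k) = w) :
    ∀ q : GaloisField 2 (3 * k), q ≠ 0 →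
      w * u ^ (2 ^ k + 1) * q ^ (2 ^ (k + s) + 2 ^ s)
        + u ^ (2 ^ k) * q ^ (2 ^ (2 * k) + 2 ^ (k + s)) ≠ 0 := by
  intro q hq hD
  have : Fintype (GaloisField 2 (3 * k)) := Fintype.ofFinite _
  have hcard : Fintype.card (GaloisField 2 (3 * k)) = 2 ^ (3 * k) := by
    rw [← Nat.card_eq_fintype_card, GaloisField.card 2 (3 * k) (by lia)]
  obtain ⟨b, hb⟩ := seven_dvd_of_gcd_three_eq_one hk3
  obtain ⟨a, ha⟩ : ∃ a, 2 ^ k = a + 1 := ⟨2 ^ k - 1, (Nat.sub_add_cancel Nat.one_le_two_pow).symm⟩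
  have ha0 : 0 < a := by
    have := Nat.one_lt_two_pow hk.ne'
    lia
  have hb0 : 0 < b := by
    have := Nat.one_le_two_pow (n := k)
    lia
  have hN : Fintype.card (GaloisField 2 (3 * k)) - 1 = 7 * (a * b) := by
    rw [pow_mul', ha] at hb
    have : 2 ^ (3 * k) = 7 * (a * b) + 1 := by
      rw [pow_mul', ha]
      linear_combination a * hb
    lia
  have hM0 : 0 < a * b := Nat.mul_pos ha0 hb0
  have hu0 : u ≠ 0 := by
    rintro rfl
    have hone : ∀ x : (GaloisField 2 (3 * k))ˣ, x ^ 1 = 1 := by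
      intro x
      obtain ⟨m, hm⟩ := hu x x.ne_zero
      rcases Nat.eq_zero_or_pos m with rfl | hm0
      · ext
        simpa using hm
      · exact absurd (hm.trans (zero_pow hm0.ne')) x.ne_zero
    have := Nat.le_of_dvd one_pos ((FiniteField.forall_pow_eq_one_iff _ 1).1 hone)
    lia
  have hcancel : w * u * q ^ 2 ^ s = q ^ 2 ^ (2 * k) := by
    have hne : u ^ 2 ^ k * q ^ 2 ^ (k + s) ≠ 0 := mul_ne_zero (pow_ne_zero _ hu0) (pow_ne_zero _ hq)
    refine mul_left_cancel₀ hne (CharTwo.add_eq_zero.1 ?_)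
    rw [← hD]
    ring
  have hw0 : w ≠ 0 := by
    rintro rfl
    rw [zero_mul, zero_mul] at hcancel
    exact pow_ne_zero _ hq hcancel.symm
  have hwM : w ^ (a * b) = 1 := by
    rw [ha, pow_succ] at hw
    rw [pow_mul, mul_right_cancel₀ hw0 (hw.trans (one_mul w).symm), one_pow]
  have hqM : (q ^ (a * b)) ^ 7 = 1 := by
    rw [← pow_mul, mul_comm (a * b), ← hN]
    exact FiniteField.pow_card_sub_one_eq_one q hq
  have hqpow : (q ^ (a * b)) ^ 2 ^ s = (q ^ (a * b)) ^ 2 ^ (2 * k) :=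
    pow_eq_pow_of_modEq (two_pow_mod_seven_eq_of_modEq_three (by unfold Nat.ModEq; lia)) hqM
  have huM : u ^ (a * b) = 1 := by
    have h := congrArg (· ^ (a * b)) hcancel
    simp only [mul_pow, hwM, one_mul] at h
    rw [pow_right_comm, pow_right_comm q (2 ^ (2 * k)), ← hqpow] at h
    exact mul_right_cancel₀ (pow_ne_zero _ (pow_ne_zero _ hq)) (h.trans (one_mul _).symm)
  have := Nat.le_of_dvd hM0 (card_sub_one_dvd_of_pow_eq_one hu huM)
  lia
end

section
/- Let s and k be positive integers with k+s divisible by 3, gcd(s,3k)=1 and gcd(k,3)=1, let u be a primitive element of GF(2^{3k}), and let w be an element of the subfield GF(2^k). For a nonzero q in GF(2^{3k}), set C = w·u^{2^k+1}·q^{2^{k+s}+2^s} + u·q^{2^s+1} and D = w·u^{2^k+1}·q^{2^{k+s}+2^s} + u^{2^k}·q^{2^{2k}+2^{k+s}}. Then C/D is a (2^k − 1)-th power in GF(2^{3k}): there exists a nonzero c in GF(2^{3k}) with C = c^{2^k−1}·D. -/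
theorem two_pow_mod_seven (n : ℕ) : 2 ^ n % 7 = 2 ^ (n % 3) % 7 := by
  conv_lhs => rw [← Nat.div_add_mod n 3, pow_add, pow_mul, Nat.mul_mod, Nat.pow_mod]
  norm_num

theorem seven_dvd_two_pow_sq_add_two_pow_add_one {k : ℕ} (hk : ¬ 3 ∣ k) :
    7 ∣ (2 ^ k) ^ 2 + 2 ^ k + 1 := by
  have h := two_pow_mod_seven k
  have hcases : k % 3 = 1 ∨ k % 3 = 2 := by omega
  rcases hcases with h1 | h1 <;> rw [h1] at h <;> norm_num at h <;>
    simp [Nat.dvd_iff_mod_eq_zero, Nat.add_mod, Nat.pow_mod (2 ^ k), h]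

/-- A generator of the multiplicative group of `GF(2^{3k})` is not a product of an element of the
subfield `GF(2^k)` and a seventh power, when `3 ∤ k`. -/
theorem mul_mul_pow_ne_of_generator {s k : ℕ} (hk : 0 < k) (h3 : 3 ∣ k + s) (hk3 : ¬ 3 ∣ k)
    {u w q : GaloisField 2 (3 * k)}
    (hu : ∀ x : GaloisField 2 (3 * k), x ≠ 0 → ∃ m : ℕ, x = u ^ m)
    (hw : w ^ (2 ^ k) = w) (hq : q ≠ 0) :
    w * u * q ^ (2 ^ s) ≠ q ^ (2 ^ (2 * k)) := by
  intro h
  have hw0 : w ≠ 0 := by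
    rintro rfl
    exact hq (by simpa using h.symm)
  have : Fintype (GaloisField 2 (3 * k)) := Fintype.ofFinite _
  have hcard : Fintype.card (GaloisField 2 (3 * k)) = 2 ^ (3 * k) := by
    rw [← Nat.card_eq_fintype_card]
    exact GaloisField.card 2 (3 * k) (by omega)
  obtain ⟨p, hp⟩ := seven_dvd_two_pow_sq_add_two_pow_add_one hk3
  obtain ⟨r, hr⟩ : ∃ r, 2 ^ k = r + 1 := ⟨2 ^ k - 1, by have := Nat.one_le_two_pow (n := k); omega⟩
  have hr0 : 0 < r := by
    have := Nat.one_lt_two_pow (n := k) (by omega)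
    omega
  have horder : 2 ^ (3 * k) - 1 = r * p * 7 := by
    have h1 : 2 ^ (3 * k) = r * p * 7 + 1 := by
      rw [mul_comm 3 k, pow_mul]
      calc (2 ^ k) ^ 3 = r * ((2 ^ k) ^ 2 + 2 ^ k + 1) + 1 := by rw [hr]; ring
        _ = r * p * 7 + 1 := by rw [hp]; ring
    omega
  have hp0 : 0 < p := by
    by_contra hp0
    obtain rfl : p = 0 := by omega
    simp at hp
  have hw1 : w ^ (r * p) = 1 := by
    have hwr : w ^ r = 1 := by
      rw [hr, pow_succ] at hw
      exact mul_right_cancel₀ hw0 (by rw [hw, one_mul])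
    rw [pow_mul, hwr, one_pow]
  have hq7 : (q ^ (r * p)) ^ 7 = 1 := by
    rw [← pow_mul, ← horder, ← hcard]
    exact FiniteField.pow_card_sub_one_eq_one q hq
  have hqq : (q ^ (r * p)) ^ (2 ^ s) = (q ^ (r * p)) ^ (2 ^ (2 * k)) := by
    rw [pow_eq_pow_mod (2 ^ s) hq7, pow_eq_pow_mod (2 ^ (2 * k)) hq7, two_pow_mod_seven s,
      two_pow_mod_seven (2 * k), show s % 3 = 2 * k % 3 by omega]
  have hu1 : u ^ (r * p) = 1 := by
    have h' := congrArg (· ^ (r * p)) h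
    simp only [mul_pow, hw1, one_mul] at h'
    rw [pow_right_comm q, pow_right_comm q (2 ^ (2 * k)), hqq] at h'
    exact mul_right_cancel₀ (pow_ne_zero _ (pow_ne_zero _ hq)) (by rw [h', one_mul])
  have hdvd : Fintype.card (GaloisField 2 (3 * k)) - 1 ∣ r * p := by
    rw [← FiniteField.forall_pow_eq_one_iff (GaloisField 2 (3 * k))]
    intro x
    obtain ⟨m, hm⟩ := hu x x.ne_zero
    ext
    rw [Units.val_pow_eq_pow_val, hm, pow_right_comm, hu1, one_pow, Units.val_one]
  rw [hcard, horder] at hdvd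
  have hle := Nat.le_of_dvd (Nat.mul_pos hr0 hp0) hdvd
  have hpos := Nat.mul_pos hr0 hp0
  omega

/-- The ratio `C/D` of the coefficients `C = w u^{2^k+1} q^{2^{k+s}+2^s} + u q^{2^s+1}`
and `D = w u^{2^k+1} q^{2^{k+s}+2^s} + u^{2^k} q^{2^{2k}+2^{k+s}}` is a
`(2^k − 1)`-th power. -/
theorem C_div_D_is_power (s k : ℕ) (hs : 0 < s) (hk : 0 < k)
    (h3 : 3 ∣ (k + s)) (hsk : Nat.gcd s (3 * k) = 1) (hk3 : Nat.gcd k 3 = 1)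
    (u w : GaloisField 2 (3 * k))
    (hu : ∀ x : GaloisField 2 (3 * k), x ≠ 0 → ∃ m : ℕ, x = u ^ m)
    (hw : w ^ (2 ^ k) = w)
    (q : GaloisField 2 (3 * k)) (hq : q ≠ 0) :
    ∃ c : GaloisField 2 (3 * k), c ≠ 0 ∧
      w * u ^ (2 ^ k + 1) * q ^ (2 ^ (k + s) + 2 ^ s) + u * q ^ (2 ^ s + 1)
        = c ^ (2 ^ k - 1)
          * (w * u ^ (2 ^ k + 1) * q ^ (2 ^ (k + s) + 2 ^ s)
              + u ^ (2 ^ k) * q ^ (2 ^ (2 * k) + 2 ^ (k + s))) := by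
  have hk3' : ¬ 3 ∣ k := fun h => by
    have := Nat.gcd_eq_right h
    omega
  rcases eq_or_ne u 0 with rfl | hu0
  · exact ⟨1, one_ne_zero, by simp⟩
  set X := w * u * q ^ (2 ^ s) + q ^ (2 ^ (2 * k)) with hX
  have hX0 : X ≠ 0 := fun h =>
    mul_mul_pow_ne_of_generator hk h3 hk3' hu hw hq (CharTwo.add_eq_zero.mp h)
  have hqcard : q ^ (2 ^ (3 * k)) = q := by
    have : Fintype (GaloisField 2 (3 * k)) := Fintype.ofFinite _
    have hcard : Fintype.card (GaloisField 2 (3 * k)) = 2 ^ (3 * k) := by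
      rw [← Nat.card_eq_fintype_card]
      exact GaloisField.card 2 (3 * k) (by omega)
    rw [← hcard]
    exact FiniteField.pow_card q
  have hXfrob : X ^ (2 ^ k) = w * u ^ (2 ^ k) * q ^ (2 ^ (k + s)) + q := by
    rw [hX, add_pow_char_pow, mul_pow, mul_pow, hw, ← pow_mul, ← pow_mul, ← pow_add, ← pow_add,
      add_comm s k, show 2 * k + k = 3 * k by ring, hqcard]
  have hpow : ∀ x : GaloisField 2 (3 * k), x ^ (2 ^ k) = x ^ (2 ^ k - 1) * x := fun x => by
    rw [← pow_succ, Nat.sub_add_cancel Nat.one_le_two_pow]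
  set Y := u * q ^ (2 ^ s) with hY
  have hY0 : Y ≠ 0 := mul_ne_zero hu0 (pow_ne_zero _ hq)
  have hYfrob : Y ^ (2 ^ k) = u ^ (2 ^ k) * q ^ (2 ^ (k + s)) := by
    rw [hY, mul_pow, ← pow_mul, ← pow_add, add_comm s k]
  refine ⟨X / Y, div_ne_zero hX0 hY0, ?_⟩
  calc _ = Y * X ^ (2 ^ k) := by rw [hXfrob, hY]; ring
    _ = (X / Y) ^ (2 ^ k - 1) * (Y ^ (2 ^ k) * X) := by
      rw [div_pow, hpow X, hpow Y]
      field_simp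
    _ = _ := by rw [hYfrob, hX]; ring
end
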